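/- Let F = u • 1 + v • H + Σ_k u_k • γ^k + Σ_k v_k • (H * γ^k) + Σ_{p,q} w p q • (γ^p * γ^q) with w skew-symmetric (w p q = -w q p). Then F is d-symmetric (Fᵀ * d = d * F) if and only if u_k = 0 for all k in {0,1,2,3} and w p q = 0 for all p, q in {0,1,2,3}. -/

import Mathlib

open Matrix

noncomputable section

/-- The Dirac γ-matrices (upper index) in the chiral representation. -/
def γup : Fin 4 → Matrix (Fin 4) (Fin 4) ℂ :=
  ![!![0,0,1,0; 0,0,0,1; 1,0,0,0; 0,1,0,0],
    !![0,0,0,-1; 0,0,-1,0; 0,1,0,0; 1,0,0,0],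
    !![0,0,0,Complex.I; 0,0,-Complex.I,0; 0,-Complex.I,0,0; Complex.I,0,0,0],
    !![0,0,-1,0; 0,0,0,1; 1,0,0,0; 0,-1,0,0]]

/-- The lowered-index Dirac γ-matrices: γ₀ = γ⁰, γⱼ = -γʲ for j = 1,2,3. -/
def γdn : Fin 4 → Matrix (Fin 4) (Fin 4) ℂ :=
  ![γup 0, -γup 1, -γup 2, -γup 3]

/-- The chirality operator H = diag(1,1,-1,-1). -/
def Hc : Matrix (Fin 4) (Fin 4) ℂ :=
  !![1,0,0,0; 0,1,0,0; 0,0,-1,0; 0,0,0,-1]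

/-- Components of the Minkowski metric of signature (+,-,-,-). -/
def η (p q : Fin 4) : ℂ := if p = q then (if p = 0 then 1 else -1) else 0

/-- The Kronecker delta. -/
def δ (p q : Fin 4) : ℂ := if p = q then 1 else 0

/-- The Levi-Civita symbol: the sign of the permutation (p,q,r,s) of (0,1,2,3),
and 0 if any two indices coincide. -/
def ε (p q r s : Fin 4) : ℂ :=
  ((∏ i : Fin 4, ∏ j : Fin 4,
      if i < j then Int.sign ((![p,q,r,s] j : ℤ) - (![p,q,r,s] i : ℤ)) else 1 : ℤ) : ℂ)

/-- The spinor metric matrix. -/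
def dm : Matrix (Fin 4) (Fin 4) ℂ := !![0,1,0,0; -1,0,0,0; 0,0,0,-1; 0,0,1,0]

/-- The Dirac form matrix. -/
def Dm : Matrix (Fin 4) (Fin 4) ℂ := !![0,0,1,0; 0,0,0,1; 1,0,0,0; 0,1,0,0]

end

/-- The expansion F = u·1 + v·H + Σ_k u_k γ^k + Σ_k v_k H γ^k + Σ_{p,q} w_{pq} γ^p γ^q. -/
noncomputable def diracExpand (u v : ℂ) (uv vv : Fin 4 → ℂ) (w : Fin 4 → Fin 4 → ℂ) :
    Matrix (Fin 4) (Fin 4) ℂ :=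
  u • (1 : Matrix (Fin 4) (Fin 4) ℂ) + v • Hc + (∑ k : Fin 4, uv k • γup k)
    + (∑ k : Fin 4, vv k • (Hc * γup k))
    + ∑ p : Fin 4, ∑ q : Fin 4, w p q • (γup p * γup q)

/-!
The `d`-adjoint `A ↦ d⁻¹ Aᵀ d` is a linear anti-automorphism which fixes `H` and negates every
`γ^k`. Hence it fixes `1`, `H` and `H γ^k`, and negates the vector part `Σ u_k γ^k` and the bivector
part `Σ w_{pq} γ^p γ^q`, so `F` is `d`-symmetric iff the sum of these two parts vanishes. As `H`
anticommutes with the `γ^k`, it separates odd from even, so both parts vanish. Finally, the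
anticommutator with `γ^r` sends a vector to a scalar and the commutator with `γ^r` sends a bivector
to a vector; by nondegeneracy of the metric, the coefficients vanish.
-/

section Adjoint

instance {m n R M : Type*} [Semiring R] [AddCommMonoid M] [Module R M] [Module.IsTorsionFree R M] :
    Module.IsTorsionFree R (Matrix m n M) :=
  inferInstanceAs (Module.IsTorsionFree R (m → n → M))

lemma eq_zero_of_eq_neg {R M : Type*} [CommRing R] [IsDomain R] [AddCommGroup M] [Module R M]
    [Module.IsTorsionFree R M] (h2 : (2 : R) ≠ 0) {x : M} (h : x = -x) : x = 0 :=
  (smul_eq_zero_iff_right h2).mp (by rw [two_smul, ← eq_neg_iff_add_eq_zero]; exact h)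

variable {R : Type*} [CommRing R]

lemma isAdjointPair_mul {l m n : Type*} [Fintype l] [Fintype m] [Fintype n]
    {J₁ : Matrix l l R} {J₂ : Matrix m m R} {J₃ : Matrix n n R}
    {A : Matrix m l R} {A' : Matrix l m R} {B : Matrix n m R} {B' : Matrix m n R}
    (hA : J₁.IsAdjointPair J₂ A A') (hB : J₂.IsAdjointPair J₃ B B') :
    J₁.IsAdjointPair J₃ (B * A) (A' * B') :=
  calc (B * A)ᵀ * J₃ = Aᵀ * (Bᵀ * J₃) := by rw [transpose_mul, Matrix.mul_assoc]
    _ = Aᵀ * J₂ * B' := by rw [hB, Matrix.mul_assoc]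
    _ = J₁ * (A' * B') := by rw [hA, Matrix.mul_assoc]

variable {n : Type*} [Fintype n] [DecidableEq n] {J : Matrix n n R}

lemma isSelfAdjoint_add_iff_eq_zero [IsDomain R] (h2 : (2 : R) ≠ 0) (hJ : J.det ≠ 0)
    {S K : Matrix n n R} (hS : J.IsSelfAdjoint S) (hK : J.IsSkewAdjoint K) :
    J.IsSelfAdjoint (S + K) ↔ K = 0 := by
  refine ⟨fun h ↦ ?_, fun h ↦ by rwa [h, add_zero]⟩
  have K_selfAdjoint : J.IsSelfAdjoint K := by
    rw [← mem_selfAdjointMatricesSubmodule] at h hS ⊢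
    exact (Submodule.add_mem_iff_right _ hS).mp h
  have J_mul_eq : J * K = J * -K := K_selfAdjoint.symm.trans hK
  exact eq_zero_of_eq_neg h2 <|
    (isRegular_of_isLeftRegular_det (IsRegular.of_ne_zero hJ).left).left J_mul_eq

end Adjoint

section Clifford

variable {ι R A : Type*} [CommRing R] [Ring A] [Algebra R A]

lemma eq_zero_of_anticommute_of_commute_of_add_eq_zero [IsDomain R] [Module.IsTorsionFree R A]
    (h2 : (2 : R) ≠ 0) {H x y : A} (hH : IsLeftRegular H) (hx : SemiconjBy H x (-x))
    (hy : Commute H y) (hxy : x + y = 0) : x = 0 := by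
  have x_commute : Commute H x := by
    rw [eq_neg_of_add_eq_zero_left hxy]
    exact hy.neg_right
  refine eq_zero_of_eq_neg h2 (hH ?_)
  calc H * x = x * H := x_commute
    _ = H * -x := by rw [mul_neg, hx.eq, neg_mul, neg_neg]

/-- The relations `γ_p γ_q + γ_q γ_p = 2 B_{pq}`: the family `γ` generates a representation of the
Clifford algebra of the symmetric bilinear form with Gram matrix `B`. -/
def IsCliffordFamily (B : Matrix ι ι R) (γ : ι → A) : Prop :=
  ∀ p q, γ p * γ q + γ q * γ p = (2 * B p q) • (1 : A)

lemma IsCliffordFamily.lie_mul {B : Matrix ι ι R} {γ : ι → A} (hγ : IsCliffordFamily B γ)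
    (r p q : ι) :
    ⁅γ r, γ p * γ q⁆ = (2 * B r p) • γ q - (2 * B r q) • γ p :=
  calc ⁅γ r, γ p * γ q⁆
      = (γ r * γ p + γ p * γ r) * γ q - γ p * (γ r * γ q + γ q * γ r) := by
        rw [Ring.lie_def]; noncomm_ring
    _ = (2 * B r p) • γ q - (2 * B r q) • γ p := by
        rw [hγ, hγ, smul_one_mul, mul_smul_one]

variable [Fintype ι]

/-- The bivector `Σ_{p,q} w_{pq} γ_p γ_q`, summed over all ordered pairs of indices. -/
def bivector (γ : ι → A) (w : ι → ι → R) : A :=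
  ∑ p, ∑ q, w p q • (γ p * γ q)

section Parity

variable {H : A} {γ : ι → A} (hHγ : ∀ k, SemiconjBy H (γ k) (-γ k))
include hHγ

lemma semiconjBy_neg_sum_smul (c : ι → R) :
    SemiconjBy H (∑ k, c k • γ k) (-∑ k, c k • γ k) := by
  simp only [SemiconjBy, Finset.mul_sum, mul_smul_comm, (hHγ _).eq, ← Finset.sum_neg_distrib,
    Finset.sum_mul, neg_mul, smul_mul_assoc, smul_neg]

lemma commute_bivector (w : ι → ι → R) : Commute H (bivector γ w) :=
  Commute.sum_right _ _ _ fun p _ ↦ Commute.sum_right _ _ _ fun q _ ↦ by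
    have := (hHγ p).mul_right (hHγ q)
    rw [neg_mul_neg] at this
    exact Commute.smul_right this _

end Parity

lemma isSkewAdjoint_bivector {n : Type*} [Fintype n] [DecidableEq n] {J : Matrix n n R}
    {γ : ι → Matrix n n R} (hJγ : ∀ k, J.IsSkewAdjoint (γ k)) {w : ι → ι → R}
    (hw : ∀ p q, w p q = -w q p) : J.IsSkewAdjoint (bivector γ w) := by
  have adjoint_mul (p q : ι) : (γ p * γ q)ᵀ * J = J * (γ q * γ p) := by
    have mul_adjoint := isAdjointPair_mul (hJγ q) (hJγ p)
    rwa [neg_mul_neg] at mul_adjoint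
  calc (bivector γ w)ᵀ * J = J * ∑ p, ∑ q, w p q • (γ q * γ p) := by
        simp only [bivector, transpose_sum, transpose_smul, Finset.sum_mul, Finset.mul_sum,
          smul_mul_assoc, mul_smul_comm, adjoint_mul]
    _ = J * ∑ p, ∑ q, -w p q • (γ p * γ q) := by
        rw [Finset.sum_comm]
        simp only [← hw]
    _ = J * -bivector γ w := by
        simp only [bivector, neg_smul, Finset.sum_neg_distrib]

namespace IsCliffordFamily

variable {B : Matrix ι ι R} {γ : ι → A} (hγ : IsCliffordFamily B γ)
include hγ

lemma mul_sum_smul_add_sum_smul_mul (c : ι → R) (r : ι) :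
    γ r * (∑ k, c k • γ k) + (∑ k, c k • γ k) * γ r = (2 * (B *ᵥ c) r) • (1 : A) := by
  simp only [Finset.mul_sum, Finset.sum_mul, mul_smul_comm, smul_mul_assoc,
    ← Finset.sum_add_distrib, ← smul_add, hγ r, mulVec, dotProduct, Finset.sum_smul, smul_smul]
  exact Finset.sum_congr rfl fun k _ ↦ by congr 1; ring

lemma lie_bivector {w : ι → ι → R} (hw : ∀ p q, w p q = -w q p) (r : ι) :
    ⁅γ r, bivector γ w⁆ = ∑ q, (4 * (B *ᵥ (w · q)) r) • γ q := by
  have sum_swap : ∑ p, ∑ q, (w p q * (2 * B r q)) • γ p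
      = -∑ p, ∑ q, (w p q * (2 * B r p)) • γ q := by
    rw [Finset.sum_comm]
    simp only [← Finset.sum_neg_distrib, ← neg_smul, ← neg_mul, ← hw]
  calc ⁅γ r, bivector γ w⁆
      = ∑ p, ∑ q, w p q • ⁅γ r, γ p * γ q⁆ := by
        simp only [bivector, Ring.lie_def, Finset.mul_sum, Finset.sum_mul, mul_smul_comm,
          smul_mul_assoc, smul_sub, Finset.sum_sub_distrib]
    _ = ∑ p, ∑ q, (w p q * (2 * B r p)) • γ q - ∑ p, ∑ q, (w p q * (2 * B r q)) • γ p := by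
        simp only [hγ.lie_mul, smul_sub, smul_smul, Finset.sum_sub_distrib]
    _ = ∑ q, ∑ p, (4 * (B r p * w p q)) • γ q := by
        rw [sum_swap, sub_neg_eq_add, Finset.sum_comm]
        simp only [← Finset.sum_add_distrib, ← add_smul]
        exact Finset.sum_congr rfl fun q _ ↦ Finset.sum_congr rfl fun p _ ↦ by congr 1; ring
    _ = ∑ q, (4 * (B *ᵥ (w · q)) r) • γ q := by
        simp only [mulVec, dotProduct, Finset.mul_sum, Finset.sum_smul]

variable [DecidableEq ι] [IsDomain R] [Module.IsTorsionFree R A] [Nontrivial A]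

lemma linearIndependent (h2 : (2 : R) ≠ 0) (hB : B.det ≠ 0) : LinearIndependent R γ := by
  refine Fintype.linearIndependent_iff.mpr fun c hc ↦ ?_
  have mulVec_eq_zero : B *ᵥ c = 0 := by
    ext r
    have := hγ.mul_sum_smul_add_sum_smul_mul c r
    simpa [hc, h2] using this.symm
  exact congrFun (eq_zero_of_mulVec_eq_zero hB mulVec_eq_zero)

lemma eq_zero_of_bivector_eq_zero (h2 : (2 : R) ≠ 0) (hB : B.det ≠ 0) {w : ι → ι → R}
    (hw : ∀ p q, w p q = -w q p) (h : bivector γ w = 0) (p q : ι) : w p q = 0 := by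
  have h4 : (4 : R) ≠ 0 := by
    rw [show (4 : R) = 2 * 2 by norm_num]
    exact mul_ne_zero h2 h2
  have mulVec_eq_zero : B *ᵥ (w · q) = 0 := by
    ext r
    have sum_eq_zero := hγ.lie_bivector hw r
    rw [h, Ring.lie_def, mul_zero, zero_mul, sub_self] at sum_eq_zero
    have := Fintype.linearIndependent_iff.mp (hγ.linearIndependent h2 hB) _ sum_eq_zero.symm q
    exact (mul_eq_zero_iff_left h4).mp this
  exact congrFun (eq_zero_of_mulVec_eq_zero hB mulVec_eq_zero) p

lemma sum_smul_add_bivector_eq_zero_iff (h2 : (2 : R) ≠ 0) (hB : B.det ≠ 0) {H : A}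
    (hH : IsLeftRegular H) (hHγ : ∀ k, SemiconjBy H (γ k) (-γ k)) (c : ι → R) {w : ι → ι → R}
    (hw : ∀ p q, w p q = -w q p) :
    ∑ k, c k • γ k + bivector γ w = 0 ↔ (∀ k, c k = 0) ∧ ∀ p q, w p q = 0 := by
  refine ⟨fun h ↦ ?_, fun ⟨hc, hw'⟩ ↦ by simp [bivector, hc, hw']⟩
  have vector_eq_zero : ∑ k, c k • γ k = 0 :=
    eq_zero_of_anticommute_of_commute_of_add_eq_zero h2 hH (semiconjBy_neg_sum_smul hHγ c)
      (commute_bivector hHγ w) h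
  have bivector_eq_zero : bivector γ w = 0 := by rwa [vector_eq_zero, zero_add] at h
  exact ⟨Fintype.linearIndependent_iff.mp (hγ.linearIndependent h2 hB) c vector_eq_zero,
    hγ.eq_zero_of_bivector_eq_zero h2 hB hw bivector_eq_zero⟩

end IsCliffordFamily

theorem dirac_expansion_d_symmetric_general {n : Type*} [Fintype n] [DecidableEq n] [Nonempty n]
    [DecidableEq ι] [IsDomain R] (h2 : (2 : R) ≠ 0) {B : Matrix ι ι R} (hB : B.det ≠ 0)
    {γ : ι → Matrix n n R} (hγ : IsCliffordFamily B γ)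
    {H : Matrix n n R} (hH : H.det ≠ 0) (hHγ : ∀ k, SemiconjBy H (γ k) (-γ k))
    {J : Matrix n n R} (hJ : J.det ≠ 0) (hJH : J.IsSelfAdjoint H)
    (hJγ : ∀ k, J.IsSkewAdjoint (γ k))
    (u v : R) (uv vv : ι → R) {w : ι → ι → R} (hw : ∀ p q, w p q = -w q p) :
    J.IsSelfAdjoint (u • (1 : Matrix n n R) + v • H + (∑ k, uv k • γ k) + (∑ k, vv k • (H * γ k))
      + ∑ p, ∑ q, w p q • (γ p * γ q)) ↔ (∀ k, uv k = 0) ∧ ∀ p q, w p q = 0 := by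
  have selfAdjoint_part :
      J.IsSelfAdjoint (u • (1 : Matrix n n R) + v • H + ∑ k, vv k • (H * γ k)) := by
    have one_selfAdjoint : J.IsSelfAdjoint 1 := by
      simp [Matrix.IsSelfAdjoint, Matrix.IsAdjointPair]
    have mul_selfAdjoint (k : ι) : J.IsSelfAdjoint (H * γ k) := by
      simpa only [Matrix.IsSelfAdjoint, (hHγ k).eq] using isAdjointPair_mul (hJγ k) hJH
    simp only [← mem_selfAdjointMatricesSubmodule] at hJH one_selfAdjoint mul_selfAdjoint ⊢
    exact add_mem (add_mem (Submodule.smul_mem _ u one_selfAdjoint) (Submodule.smul_mem _ v hJH))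
      (sum_mem fun k _ ↦ Submodule.smul_mem _ (vv k) (mul_selfAdjoint k))
  have skewAdjoint_part : J.IsSkewAdjoint (∑ k, uv k • γ k + bivector γ w) := by
    have bivector_skewAdjoint := isSkewAdjoint_bivector hJγ hw
    simp only [← mem_skewAdjointMatricesSubmodule] at hJγ bivector_skewAdjoint ⊢
    exact add_mem (sum_mem fun k _ ↦ Submodule.smul_mem _ (uv k) (hJγ k)) bivector_skewAdjoint
  have H_regular : IsLeftRegular H :=
    (isRegular_of_isLeftRegular_det (IsRegular.of_ne_zero hH).left).left
  rw [← hγ.sum_smul_add_bivector_eq_zero_iff h2 hB H_regular hHγ uv hw,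
    ← isSelfAdjoint_add_iff_eq_zero h2 hJ selfAdjoint_part skewAdjoint_part]
  exact iff_of_eq (congrArg J.IsSelfAdjoint (by rw [bivector]; abel))

end Clifford

lemma det_η_ne_zero : (of η).det ≠ 0 := by
  refine det_ne_zero_of_right_inverse (B := of η) ?_
  ext p q
  fin_cases p <;> fin_cases q <;> simp [η, mul_apply]

lemma smul_one_fin_four {R : Type*} [Semiring R] (c : R) :
    c • (1 : Matrix (Fin 4) (Fin 4) R) = !![c, 0, 0, 0; 0, c, 0, 0; 0, 0, c, 0; 0, 0, 0, c] := by
  ext i j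
  fin_cases i <;> fin_cases j <;> simp

lemma isCliffordFamily_γup : IsCliffordFamily (of η) γup := by
  intro p q
  rw [smul_one_fin_four]
  fin_cases p <;> fin_cases q <;> norm_num [γup, η]

lemma det_Hc_ne_zero : Hc.det ≠ 0 := by
  refine det_ne_zero_of_right_inverse (B := Hc) ?_
  ext i j
  fin_cases i <;> fin_cases j <;> simp [Hc]

lemma semiconjBy_Hc_γup (k : Fin 4) : SemiconjBy Hc (γup k) (-γup k) := by
  fin_cases k <;> simp [SemiconjBy, Hc, γup]

lemma det_dm_ne_zero : dm.det ≠ 0 := by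
  refine det_ne_zero_of_right_inverse (B := -dm) ?_
  ext i j
  fin_cases i <;> fin_cases j <;> simp [dm]

lemma isSelfAdjoint_dm_Hc : dm.IsSelfAdjoint Hc := by
  ext i j
  fin_cases i <;> fin_cases j <;> simp [dm, Hc, mul_apply, Fin.sum_univ_four]

lemma isSkewAdjoint_dm_γup (k : Fin 4) : dm.IsSkewAdjoint (γup k) := by
  ext i j
  fin_cases k <;> fin_cases i <;> fin_cases j <;>
    simp [dm, γup, mul_apply, Fin.sum_univ_four]

/-- A spin-operator is symmetric w.r.t. the spinor metric d iff the coefficients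
u_k and w_{pq} of its expansion vanish. -/
theorem dirac_expansion_d_symmetric
    (u v : ℂ) (uv vv : Fin 4 → ℂ) (w : Fin 4 → Fin 4 → ℂ)
    (hw : ∀ p q, w p q = -w q p)
    (F : Matrix (Fin 4) (Fin 4) ℂ) (hF : F = diracExpand u v uv vv w) :
    Fᵀ * dm = dm * F ↔ ((∀ k : Fin 4, uv k = 0) ∧ ∀ p q : Fin 4, w p q = 0) := by
  subst hF
  exact dirac_expansion_d_symmetric_general two_ne_zero det_η_ne_zero isCliffordFamily_γup
    det_Hc_ne_zero semiconjBy_Hc_γup det_dm_ne_zero isSelfAdjoint_dm_Hc isSkewAdjoint_dm_γup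
    u v uv vv hw
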